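/- Let q be a prime power, n a positive integer, (σ,τ) ∈ Θ_{n,q}, and let H be the stabiliser in GL(n,q) of some fixed (ρ,I)-flag with (ρ,I) ∈ Σ_{n,q} of type (σ,τ). If Y ⊆ GL(n,q) is nonempty and (σ,τ)-transitive, then |Y| ≥ |GL(n,q)|/|H|, with equality if and only if Y is a (σ,τ)-clique; moreover, in the case of equality, Y is sharply transitive on (ρ,I)-flags. -/

import Mathlib

open Module

/-- The linear automorphism of `F_q^n` induced by `g ∈ GL(n,q)`. -/
def glMap (F : Type) [Field F] {n : ℕ} (g : GL (Fin n) F) : (Fin n → F) →ₗ[F] (Fin n → F) :=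
  Matrix.mulVecLin (g : Matrix (Fin n) (Fin n) F)

/-- An element `α = (ρ, I)` of `Σ_{n,q}`: a composition `ρ` of `n` together with a set `I` of
indices of parts of `ρ`, where for `q = 2` every part not indexed by `I` must exceed `1`. -/
structure SigmaNQ (q n : ℕ) where
  ρ : Composition n
  I : Finset (Fin ρ.length)
  two : q = 2 → ∀ i ∉ I, 1 < ρ.blocksFun i

/-- The first component `σ` of the type of `α = (ρ,I)`: the multiset of parts `ρ_i` with
`i ∈ I` (a partition, recorded as an unordered multiset of parts). -/
def SigmaNQ.typeSigma {q n : ℕ} (α : SigmaNQ q n) : Multiset ℕ :=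
  α.I.val.map α.ρ.blocksFun

/-- The second component `τ` of the type of `α = (ρ,I)`: the multiset of parts `ρ_i` with
`i ∉ I` (a partition, recorded as an unordered multiset of parts). -/
def SigmaNQ.typeTau {q n : ℕ} (α : SigmaNQ q n) : Multiset ℕ :=
  α.Iᶜ.val.map α.ρ.blocksFun

/-- An `α`-flag for `α = (ρ,I) ∈ Σ_{n,q}`: a `ρ`-flag `{0} = V_0 ≤ V_1 ≤ ⋯ ≤ V_k = F_q^n`
with `dim(V_i/V_{i−1}) = ρ_i`, together with, for each `i ∈ I`, an ordered basis of the
quotient `V_i/V_{i−1}`, recorded by a tuple of `ρ_i` representatives in `V_i` whose classes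
modulo `V_{i−1}` are linearly independent (hence a basis of `V_i/V_{i−1}`). -/
structure AlphaFlag (F : Type) [Field F] {q n : ℕ} (α : SigmaNQ q n) where
  V : Fin (α.ρ.length + 1) → Submodule F (Fin n → F)
  mono : Monotone V
  bot_eq : V 0 = ⊥
  top_eq : V (Fin.last α.ρ.length) = ⊤
  dim : ∀ i : Fin α.ρ.length,
    finrank F (V i.succ) = finrank F (V i.castSucc) + α.ρ.blocksFun i
  B : ∀ i : Fin α.ρ.length, i ∈ α.I → Fin (α.ρ.blocksFun i) → (Fin n → F)
  B_mem : ∀ i hi m, B i hi m ∈ V i.succ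
  B_indep : ∀ i hi,
    LinearIndependent F (fun m => (V i.castSucc).mkQ (B i hi m))

/-- `g ∈ GL(n,q)` maps the `α`-flag `A` to the `α`-flag `C`: it maps the subspaces of `A`
to those of `C`, and the basis representatives of `A` to representatives of the same classes
as those of `C` (i.e. `g` maps the induced bases of the quotients to each other). -/
def MapsAlphaFlag (F : Type) [Field F] {q n : ℕ} {α : SigmaNQ q n} (g : GL (Fin n) F)
    (A C : AlphaFlag F α) : Prop :=
  (∀ j, Submodule.map (glMap F g) (A.V j) = C.V j) ∧
  (∀ i hi m, glMap F g (A.B i hi m) - C.B i hi m ∈ C.V i.castSucc)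

/-- A subset `Y` of `GL(n,q)` is transitive on `α`-flags: there is a constant `r` such that
for all `α`-flags `A`, `C` there are exactly `r` elements `g ∈ Y` mapping `A` to `C`. -/
def TransitiveOnAlphaFlags (F : Type) [Field F] [Fintype F] {q n : ℕ} (Y : Set (GL (Fin n) F))
    (α : SigmaNQ q n) : Prop :=
  ∃ r : ℕ, ∀ A C : AlphaFlag F α,
    Nat.card {g : GL (Fin n) F // g ∈ Y ∧ MapsAlphaFlag F g A C} = r


/-- `(σ,τ) ∈ Θ_{n,q}`: `σ` and `τ` are partitions (multisets of positive parts) with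
`|σ| + |τ| = n` such that, if `q = 2`, every part of `τ` is greater than `1`. -/
def InTheta (q n : ℕ) (σ τ : Multiset ℕ) : Prop :=
  (∀ p ∈ σ, 0 < p) ∧ (∀ p ∈ τ, 0 < p) ∧ σ.sum + τ.sum = n ∧ (q = 2 → ∀ p ∈ τ, 1 < p)

/-- `Y ⊆ GL(n,q)` is `(σ,τ)`-transitive if it is transitive on `α`-flags for some
`α ∈ Σ_{n,q}` of type `(σ,τ)`. -/
def STTransitive (F : Type) [Field F] [Fintype F] (q n : ℕ) (Y : Set (GL (Fin n) F))
    (σ τ : Multiset ℕ) : Prop :=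
  ∃ α : SigmaNQ q n, α.typeSigma = σ ∧ α.typeTau = τ ∧ TransitiveOnAlphaFlags F Y α

/-- `Y ⊆ GL(n,q)` is a `(σ,τ)`-clique if for all distinct `x, y ∈ Y` the element `x⁻¹y`
fixes no `α`-flag with `α ∈ Σ_{n,q}` of type `(σ,τ)`. -/
def STClique (F : Type) [Field F] [Fintype F] (q n : ℕ) (Y : Set (GL (Fin n) F))
    (σ τ : Multiset ℕ) : Prop :=
  ∀ x ∈ Y, ∀ y ∈ Y, x ≠ y → ∀ α : SigmaNQ q n, α.typeSigma = σ → α.typeTau = τ →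
    ∀ A : AlphaFlag F α, ¬ MapsAlphaFlag F (x⁻¹ * y) A A

open Polynomial in
/-- An `F[X]`-module carries a nondegenerate symmetric `F`-bilinear form for which multiplication
by `X` is self-adjoint. -/
def HasSelfAdjointForm (F N : Type) [Field F] [AddCommGroup N] [Module F[X] N] : Prop :=
  ∃ B : N → N → F, (∀ x y z, B (x + y) z = B x z + B y z) ∧ (∀ x y, B x y = B y x) ∧
    (∀ c x y, B ((C c : F[X]) • x) y = c * B x y) ∧
    (∀ x y, B ((X : F[X]) • x) y = B x ((X : F[X]) • y)) ∧
    ∀ x, (∀ y, B x y = 0) → x = 0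

open Polynomial in
theorem HasSelfAdjointForm.of_equiv {F N P : Type} [Field F] [AddCommGroup N] [Module F[X] N]
    [AddCommGroup P] [Module F[X] P] (h : HasSelfAdjointForm F N) (e : P ≃ₗ[F[X]] N) :
    HasSelfAdjointForm F P := by
  obtain ⟨B, h1, h2, h3, h4, h5⟩ := h
  refine ⟨fun x y => B (e x) (e y), ?_, ?_, ?_, ?_, ?_⟩
  · intro x y z; simp [h1]
  · intro x y; exact h2 _ _
  · intro c x y; simp [h3]
  · intro x y; simp [h4]
  · intro x hx
    have := h5 (e x) fun y => by simpa using hx (e.symm y)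
    simpa using this

open Polynomial DirectSum in
theorem HasSelfAdjointForm.directSum {F ι : Type} [Field F] [Fintype ι] (N : ι → Type)
    [∀ i, AddCommGroup (N i)] [∀ i, Module F[X] (N i)]
    (h : ∀ i, HasSelfAdjointForm F (N i)) : HasSelfAdjointForm F (⨁ i, N i) := by
  classical
  choose B h1 h2 h3 h4 h5 using h
  refine ⟨fun x y => ∑ i, B i (x i) (y i), ?_, ?_, ?_, ?_, ?_⟩
  · intro x y z; simp [h1, Finset.sum_add_distrib]
  · intro x y; exact Finset.sum_congr rfl fun i _ => h2 i _ _
  · intro c x y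
    rw [Finset.mul_sum]
    exact Finset.sum_congr rfl fun i _ => by rw [DirectSum.smul_apply, h3]
  · intro x y
    exact Finset.sum_congr rfl fun i _ => by rw [DirectSum.smul_apply, DirectSum.smul_apply, h4]
  · intro x hx
    have B0 : ∀ i z, B i z 0 = 0 := fun i z => by
      have := h1 i 0 0 z
      rw [h2]
      simpa using this
    ext i
    refine h5 i _ fun y => ?_
    have := hx (DirectSum.of N i y)
    beta_reduce at this
    rw [Finset.sum_eq_single i] at this
    · simpa using this
    · intro j _ hj
      rw [DirectSum.of_eq_of_ne _ _ _ hj, B0]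
    · simp

open Polynomial in
theorem hasSelfAdjointForm_quotient {F : Type} [Field F] (h : F[X]) (h0 : h ≠ 0) :
    HasSelfAdjointForm F (F[X] ⧸ Ideal.span {h}) := by
  set h' : F[X] := h * C h.leadingCoeff⁻¹ with hh'
  have hm : h'.Monic := monic_mul_leadingCoeff_inv h0
  have hdvd : h' ∣ h := by
    refine ⟨C h.leadingCoeff, ?_⟩
    rw [hh', mul_assoc, ← C_mul, inv_mul_cancel₀ (leadingCoeff_ne_zero.mpr h0), C_1, mul_one]
  have hdvd' : h ∣ h' := ⟨_, rfl⟩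
  let L : F[X] →+ F := ((lcoeff F (h'.natDegree - 1)).comp (modByMonicHom h')).toAddMonoidHom
  have hL : ∀ a ∈ Ideal.span {h}, L a = 0 := by
    intro a ha
    have : a %ₘ h' = 0 :=
      (modByMonic_eq_zero_iff_dvd hm).mpr (hdvd.trans (Ideal.mem_span_singleton.mp ha))
    change (a %ₘ h').coeff _ = 0
    simp [this]
  let l : F[X] ⧸ Ideal.span {h} →+ F := QuotientAddGroup.lift _ L hL
  have hl : ∀ p : F[X], l (Ideal.Quotient.mk _ p) = (p %ₘ h').coeff (h'.natDegree - 1) :=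
    fun p => rfl
  refine ⟨fun x y => l (x * y), ?_, ?_, ?_, ?_, ?_⟩
  · intro x y z; simp [add_mul]
  · intro x y; simp only [mul_comm]
  · intro c x y
    obtain ⟨p, rfl⟩ := Ideal.Quotient.mk_surjective x
    obtain ⟨r, rfl⟩ := Ideal.Quotient.mk_surjective y
    change l (Ideal.Quotient.mk _ (C c * p * r)) = c * l (Ideal.Quotient.mk _ (p * r))
    rw [hl, hl, mul_assoc, ← smul_eq_C_mul, smul_modByMonic, coeff_smul, smul_eq_mul]
  · intro x y
    simp only [smul_mul_assoc, mul_smul_comm]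
  · intro x hx
    obtain ⟨p, rfl⟩ := Ideal.Quotient.mk_surjective x
    by_contra hne
    set r := p %ₘ h' with hr
    have hpr : Ideal.Quotient.mk (Ideal.span {h}) p = Ideal.Quotient.mk _ r := by
      rw [Ideal.Quotient.mk_eq_mk_iff_sub_mem, Ideal.mem_span_singleton]
      refine hdvd'.trans ⟨p /ₘ h', ?_⟩
      rw [hr, sub_eq_iff_eq_add, add_comm, modByMonic_add_div]
    have hr0 : r ≠ 0 := by
      intro h
      rw [hpr, h, map_zero] at hne
      exact hne rfl
    have hdeg : r.natDegree < h'.natDegree := by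
      have := degree_modByMonic_lt p hm
      exact natDegree_lt_natDegree hr0 this
    have key := hx (Ideal.Quotient.mk _ (X ^ (h'.natDegree - 1 - r.natDegree)))
    simp only at key
    rw [hpr, ← map_mul, hl, (modByMonic_eq_self_iff hm).mpr] at key
    · rw [show h'.natDegree - 1 = r.natDegree + (h'.natDegree - 1 - r.natDegree) by omega,
        Nat.add_sub_cancel_left, coeff_mul_X_pow] at key
      exact hr0 (leadingCoeff_eq_zero.mp key)
    · apply degree_lt_degree
      rw [natDegree_mul_X_pow _ hr0]
      omega

/-- Every endomorphism of a finite-dimensional space is self-adjoint for some nondegenerate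
symmetric bilinear form. -/
theorem exists_selfAdjoint_form {F M : Type} [Field F] [AddCommGroup M] [Module F M]
    [FiniteDimensional F M] (f : M →ₗ[F] M) :
    ∃ B : LinearMap.BilinForm F M, (∀ x y, B x y = B y x) ∧ B.Nondegenerate ∧
      ∀ x y, B (f x) y = B x (f y) := by
  have hT := Module.AEval.isTorsion_of_finiteDimensional F M f
  obtain ⟨ι, _, p, hp, e, ⟨E⟩⟩ := Module.equiv_directSum_of_isTorsion hT
  obtain ⟨B, h1, h2, h3, h4, h5⟩ := (HasSelfAdjointForm.directSum
    (fun i => Polynomial F ⧸ Ideal.span {p i ^ e i})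
    fun i => hasSelfAdjointForm_quotient _ (pow_ne_zero _ (hp i).ne_zero)).of_equiv E
  have h3' : ∀ (c : F) x y, B (Module.AEval.of F M f (c • x)) y
      = c * B (Module.AEval.of F M f x) y := by
    intro c x y
    rw [← h3, map_smul, Module.AEval.C_smul]
  let Bf : LinearMap.BilinForm F M := LinearMap.mk₂ F
    (fun x y => B (Module.AEval.of F M f x) (Module.AEval.of F M f y))
    (fun x y z => by simp [h1]) (fun c x y => h3' c x _)
    (fun x y z => by rw [h2, map_add, h1, h2 _ (Module.AEval.of F M f x),
      h2 _ (Module.AEval.of F M f x)])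
    (fun c x y => by rw [h2, h3', h2, smul_eq_mul])
  have hs : ∀ x y, Bf x y = Bf y x := fun x y => h2 _ _
  have hnd : ∀ x, (∀ y, Bf x y = 0) → x = 0 := fun x hx => by
    have := h5 (Module.AEval.of F M f x) fun y => by
      simpa [Bf] using hx ((Module.AEval.of F M f).symm y)
    simpa using this
  refine ⟨Bf, hs, ⟨hnd, fun y hy => hnd y fun x => by rw [hs]; exact hy x⟩, fun x y => ?_⟩
  change B (Module.AEval.of F M f (f • x)) _ = B _ (Module.AEval.of F M f (f • y))
  rw [← Module.AEval.X_smul_of, ← Module.AEval.X_smul_of, h4]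

/-- An invariant subspace `N` has a dual invariant subspace of complementary dimension, such that
the actions on the sub and on the quotient are interchanged. -/
theorem exists_dual_invariant {F M : Type} [Field F] [AddCommGroup M] [Module F M]
    [FiniteDimensional F M] (f : M →ₗ[F] M) (N : Submodule F M) (hN : ∀ x ∈ N, f x ∈ N) :
    ∃ N' : Submodule F M, (∀ x ∈ N', f x ∈ N') ∧ finrank F N + finrank F N' = finrank F M ∧
      ((∀ x ∈ N, f x = x) → ∀ x, f x - x ∈ N') ∧
      ((∀ x, f x - x ∈ N) → ∀ x ∈ N', f x = x) := by
  obtain ⟨B, hs, hnd, ha⟩ := exists_selfAdjoint_form f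
  have hmem : ∀ x, x ∈ B.orthogonal N ↔ ∀ y ∈ N, B y x = 0 := fun x => Iff.rfl
  refine ⟨B.orthogonal N, fun x hx => ?_, ?_, fun h x => ?_, fun h x hx => ?_⟩
  · rw [hmem] at hx ⊢
    intro y hy
    rw [← ha]
    exact hx _ (hN y hy)
  · have := LinearMap.BilinForm.finrank_orthogonal hnd N
    have h2 := Submodule.finrank_le N
    omega
  · rw [hmem]
    intro y hy
    rw [map_sub, ← ha, h y hy, sub_self]
  · rw [hmem] at hx
    rw [← sub_eq_zero]
    refine hnd.1 _ fun y => ?_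
    have := hx _ (h y)
    rw [map_sub, LinearMap.sub_apply, ha, ← map_sub, hs] at this
    exact this

/-- One step of an `f`-invariant filtration: `W ≤ W'` are invariant, the quotient has
dimension `p.1` and, if `p.2` holds, `f` acts trivially on it. -/
def FlagStep {F V : Type} [Field F] [AddCommGroup V] [Module F V] (f : V →ₗ[F] V)
    (p : ℕ × Bool) (W W' : Submodule F V) : Prop :=
  W ≤ W' ∧ (∀ x ∈ W, f x ∈ W) ∧ (∀ x ∈ W', f x ∈ W') ∧
    finrank F W' = finrank F W + p.1 ∧ (p.2 = true → ∀ v ∈ W', f v - v ∈ W)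

theorem FlagStep.swap {F V : Type} [Field F] [AddCommGroup V] [Module F V]
    [FiniteDimensional F V] {f : V →ₗ[F] V} {p q : ℕ × Bool} {W W₁ W₂ : Submodule F V}
    (h₁ : FlagStep f p W W₁) (h₂ : FlagStep f q W₁ W₂) :
    ∃ W₁', FlagStep f q W W₁' ∧ FlagStep f p W₁' W₂ := by
  obtain ⟨l1, iW, i1, d1, t1⟩ := h₁
  obtain ⟨l2, -, i2, d2, t2⟩ := h₂
  set K : Submodule F W₂ := W.comap W₂.subtype with hK
  let f₂ : W₂ →ₗ[F] W₂ := f.restrict i2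
  let g : (W₂ ⧸ K) →ₗ[F] (W₂ ⧸ K) := K.mapQ K f₂ fun x hx => iW _ hx
  have hg : ∀ x : W₂, g (K.mkQ x) = K.mkQ (f₂ x) := fun x => rfl
  have hzero : ∀ x : W₂, K.mkQ x = 0 ↔ (x : V) ∈ W := fun x => by simp [hK]
  have hdim : ∀ P : Submodule F (W₂ ⧸ K),
      finrank F ((P.comap K.mkQ).map W₂.subtype) = finrank F P + finrank F W := by
    intro P
    have hle : K ≤ P.comap K.mkQ := by
      intro x hx
      have : K.mkQ x = 0 := by simpa using hx
      simp [Submodule.mem_comap, this]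
    have hKW : finrank F K = finrank F W :=
      (Submodule.comapSubtypeEquivOfLe (l1.trans l2)).finrank_eq
    rw [Submodule.finrank_map_subtype_eq]
    have := LinearMap.finrank_range_add_finrank_ker ((K.mkQ).domRestrict (P.comap K.mkQ))
    have hr : LinearMap.range ((K.mkQ).domRestrict (P.comap K.mkQ)) = P := by
      rw [LinearMap.range_domRestrict, Submodule.map_comap_eq_of_surjective K.mkQ_surjective]
    have hk : finrank F (LinearMap.ker ((K.mkQ).domRestrict (P.comap K.mkQ))) = finrank F K := by
      rw [LinearMap.ker_domRestrict, Submodule.ker_mkQ]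
      exact (Submodule.comapSubtypeEquivOfLe hle).finrank_eq
    rw [hr, hk, hKW] at this
    omega
  set N : Submodule F (W₂ ⧸ K) := (W₁.comap W₂.subtype).map K.mkQ with hN
  have hNmem : ∀ x : W₂, K.mkQ x ∈ N ↔ (x : V) ∈ W₁ := by
    intro x
    have hle : K ≤ W₁.comap W₂.subtype := fun y hy => l1 hy
    rw [hN, ← Submodule.mem_comap, Submodule.comap_map_mkQ, sup_eq_right.mpr hle]
    rfl
  have hdN : finrank F N + finrank F W = finrank F W₁ := by
    rw [← hdim]
    suffices (N.comap K.mkQ).map W₂.subtype = W₁ by rw [this]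
    ext v
    simp only [Submodule.mem_map, Submodule.mem_comap, hNmem]
    exact ⟨fun ⟨y, hy, e⟩ => e ▸ hy, fun hv => ⟨⟨v, l2 hv⟩, hv, rfl⟩⟩
  have hdM : finrank F (W₂ ⧸ K) + finrank F W = finrank F W₂ := by
    have h := hdim ⊤
    rw [Submodule.comap_top, Submodule.map_top, Submodule.range_subtype, finrank_top] at h
    exact h.symm
  obtain ⟨N', hN'i, hN'd, ht, ht'⟩ := exists_dual_invariant g N (by
    intro x hx
    obtain ⟨y, rfl⟩ := K.mkQ_surjective x
    rw [hg, hNmem]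
    exact i1 _ ((hNmem y).mp hx))
  have hd' := hdim N'
  have hmem : ∀ x : W₂, (x : V) ∈ (N'.comap K.mkQ).map W₂.subtype ↔ K.mkQ x ∈ N' := by
    intro x
    simp only [Submodule.mem_map, Submodule.mem_comap]
    exact ⟨fun ⟨y, hy, e⟩ => Subtype.ext e ▸ hy, fun hv => ⟨x, hv, rfl⟩⟩
  have hle2 : (N'.comap K.mkQ).map W₂.subtype ≤ W₂ := Submodule.map_subtype_le _ _
  have hinv : ∀ x ∈ (N'.comap K.mkQ).map W₂.subtype, f x ∈ (N'.comap K.mkQ).map W₂.subtype := by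
    intro x hx
    have hx2 := hle2 hx
    have := hN'i _ ((hmem ⟨x, hx2⟩).mp hx)
    rw [hg] at this
    exact (hmem (f₂ ⟨x, hx2⟩)).mpr this
  refine ⟨(N'.comap K.mkQ).map W₂.subtype, ⟨fun x hx => ?_, iW, hinv, by omega, fun hq v hv => ?_⟩,
    hle2, hinv, i2, by omega, fun hp v hv => ?_⟩
  · refine (hmem ⟨x, l2 (l1 hx)⟩).mpr ?_
    rw [(hzero _).mpr hx]
    exact N'.zero_mem
  · have hv2 := hle2 hv
    have := ht' (fun x => by
      obtain ⟨y, rfl⟩ := K.mkQ_surjective x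
      rw [hg, ← map_sub, hNmem]
      exact t2 hq _ y.2) _ ((hmem ⟨v, hv2⟩).mp hv)
    rw [hg, ← sub_eq_zero, ← map_sub, hzero] at this
    exact this
  · have := ht (fun x hx => by
      obtain ⟨y, rfl⟩ := K.mkQ_surjective x
      rw [hg, ← sub_eq_zero, ← map_sub, hzero]
      exact t1 hp _ ((hNmem y).mp hx)) (K.mkQ ⟨v, hv⟩)
    rw [hg, ← map_sub, ← hmem] at this
    exact this

/-- There is an `f`-invariant filtration from `W` to the whole space with steps given by a
list. -/
def FlagChain {F V : Type} [Field F] [AddCommGroup V] [Module F V] (f : V →ₗ[F] V) :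
    Submodule F V → List (ℕ × Bool) → Prop
  | W, [] => W = ⊤
  | W, p :: L => ∃ W', FlagStep f p W W' ∧ FlagChain f W' L

theorem FlagChain.perm {F V : Type} [Field F] [AddCommGroup V] [Module F V]
    [FiniteDimensional F V] {f : V →ₗ[F] V} {L L' : List (ℕ × Bool)} (h : L.Perm L') :
    ∀ {W : Submodule F V}, FlagChain f W L → FlagChain f W L' := by
  induction h with
  | nil => exact id
  | cons p _ ih => exact fun ⟨W', h, h'⟩ => ⟨W', h, ih h'⟩
  | swap p q L =>
    rintro W ⟨W₁, h₁, W₂, h₂, h⟩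
    obtain ⟨W₁', h₁', h₂'⟩ := h₁.swap h₂
    exact ⟨W₁', h₁', W₂, h₂', h⟩
  | trans _ _ ih ih' => exact fun h => ih' (ih h)

theorem flagChain_iff {F V : Type} [Field F] [AddCommGroup V] [Module F V] {f : V →ₗ[F] V}
    {L : List (ℕ × Bool)} : ∀ {W : Submodule F V}, FlagChain f W L ↔
      ∃ U : ℕ → Submodule F V, U 0 = W ∧ U L.length = ⊤ ∧
        ∀ (i : ℕ) (hi : i < L.length), FlagStep f L[i] (U i) (U (i + 1)) := by
  induction L with
  | nil =>
    intro W
    refine ⟨fun h => ⟨fun _ => W, rfl, h, by simp⟩, fun ⟨U, h, h', _⟩ => h.symm.trans h'⟩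
  | cons p L ih =>
    intro W
    constructor
    · rintro ⟨W', h, h'⟩
      obtain ⟨U, h0, hl, hs⟩ := ih.mp h'
      refine ⟨fun i => Nat.casesOn i W U, rfl, hl, fun i hi => ?_⟩
      cases i with
      | zero => simpa [h0] using h
      | succ i => simpa using hs i (by simpa using hi)
    · rintro ⟨U, h0, hl, hs⟩
      refine ⟨U 1, ?_, ih.mpr ⟨fun i => U (i + 1), rfl, hl, fun i hi => ?_⟩⟩
      · rw [← h0]
        exact hs 0 (by simp)
      · exact hs (i + 1) (by simpa using hi)

/-- Invertible matrices that are block upper triangular for the block order given by `r`, and whose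
diagonal blocks indexed by `S` are identity matrices. -/
def blockStab (F : Type) [Field F] {κ ι : Type} [Fintype κ] [DecidableEq κ] (blk : κ → ι)
    (r : ι → ℕ) (S : ι → Prop) : Set (Matrix κ κ F) :=
  {M | IsUnit M.det ∧ (∀ x y, r (blk y) < r (blk x) → M x y = 0) ∧
    ∀ x y, blk x = blk y → S (blk x) → M x y = (1 : Matrix κ κ F) x y}

open Classical in
theorem det_eq_det_diagonal_blocks {F κ ι : Type} [Field F] [Fintype κ] [DecidableEq κ]
    {blk : κ → ι} {r : ι → ℕ} (hr : Function.Injective r) {M : Matrix κ κ F}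
    (h : ∀ x y, r (blk y) < r (blk x) → M x y = 0) :
    M.det = (Matrix.of fun x y => if blk x = blk y then M x y else 0).det := by
  have h1 : M.BlockTriangular (r ∘ blk) := fun x y => h x y
  have h2 : (Matrix.of fun x y => if blk x = blk y then M x y else 0).BlockTriangular
      (r ∘ blk) := by
    intro x y hxy
    have : blk x ≠ blk y := fun e => by simp [e] at hxy
    simp [this]
  rw [h1.det, h2.det]
  refine Finset.prod_congr rfl fun a _ => ?_
  congr 1
  ext ⟨x, hx⟩ ⟨y, hy⟩
  have : blk x = blk y := hr (hx.trans hy.symm)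
  simp [Matrix.toSquareBlock_def, this]

open Classical in
/-- Transposes the pairs of blocks on which the orders `r` and `r'` disagree. -/
noncomputable def reorderBlocks {F κ ι : Type} (blk : κ → ι) (r r' : ι → ℕ)
    (M : Matrix κ κ F) : Matrix κ κ F :=
  fun x y => if blk x = blk y ∨ (r (blk x) < r (blk y) ↔ r' (blk x) < r' (blk y))
    then M x y else M y x

theorem reorderBlocks_reorderBlocks {F κ ι : Type} (blk : κ → ι) {r r' : ι → ℕ}
    (hr : Function.Injective r) (hr' : Function.Injective r') (M : Matrix κ κ F) :
    reorderBlocks blk r' r (reorderBlocks blk r r' M) = M := by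
  ext x y
  unfold reorderBlocks
  by_cases h : blk x = blk y
  · simp [h]
  · have h1 := hr.ne h
    have h2 := hr'.ne h
    have h3 : ¬ blk y = blk x := fun e => h e.symm
    simp only [h, h3, false_or]
    split_ifs <;> first | rfl | omega

theorem reorderBlocks_mem {F κ ι : Type} [Field F] [Fintype κ] [DecidableEq κ] {blk : κ → ι}
    {r r' : ι → ℕ} {S : ι → Prop} (hr : Function.Injective r) (hr' : Function.Injective r')
    {M : Matrix κ κ F} (hM : M ∈ blockStab F blk r S) :
    reorderBlocks blk r r' M ∈ blockStab F blk r' S := by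
  obtain ⟨hd, ht, hu⟩ := hM
  have ht' : ∀ x y, r' (blk y) < r' (blk x) → reorderBlocks blk r r' M x y = 0 := by
    intro x y hxy
    have h : blk x ≠ blk y := fun e => by simp [e] at hxy
    have h1 := hr.ne h
    unfold reorderBlocks
    simp only [h, false_or]
    split_ifs
    · exact ht _ _ (by omega)
    · exact ht _ _ (by omega)
  refine ⟨?_, ht', fun x y h hS => ?_⟩
  · rw [det_eq_det_diagonal_blocks hr' ht']
    rw [det_eq_det_diagonal_blocks hr ht] at hd
    convert hd using 3
    ext x y
    by_cases h : blk x = blk y <;> simp [reorderBlocks, h]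
  · simp only [reorderBlocks, h, true_or, if_true]
    exact hu x y h hS

theorem card_blockStab_reorder {F κ ι : Type} [Field F] [Fintype κ] [DecidableEq κ] (blk : κ → ι)
    {r r' : ι → ℕ} (S : ι → Prop) (hr : Function.Injective r) (hr' : Function.Injective r') :
    Nat.card (blockStab F blk r S) = Nat.card (blockStab F blk r' S) :=
  Nat.card_congr
    { toFun := fun M => ⟨_, reorderBlocks_mem hr hr' M.2⟩
      invFun := fun M => ⟨_, reorderBlocks_mem hr' hr M.2⟩
      left_inv := fun M => Subtype.ext (reorderBlocks_reorderBlocks blk hr hr' M.1)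
      right_inv := fun M => Subtype.ext (reorderBlocks_reorderBlocks blk hr' hr M.1) }

theorem card_blockStab_reindex {F κ κ' ι ι' : Type} [Field F] [Fintype κ] [DecidableEq κ]
    [Fintype κ'] [DecidableEq κ'] {blk : κ → ι} {blk' : κ' → ι'} (r' : ι' → ℕ) {S : ι → Prop}
    {S' : ι' → Prop} (e : κ ≃ κ') {ε : ι → ι'} (hε : Function.Injective ε)
    (h : ∀ x, blk' (e x) = ε (blk x)) (hS : ∀ i, S' (ε i) ↔ S i) :
    Nat.card (blockStab F blk' r' S') = Nat.card (blockStab F blk (r' ∘ ε) S) := by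
  refine Nat.card_congr (Equiv.subtypeEquiv (Matrix.reindex e.symm e.symm) fun M => ?_)
  simp only [blockStab, Set.mem_ofPred_eq, Matrix.det_submatrix_equiv_self, e.surjective.forall, h, hS,
    hε.eq_iff, Matrix.reindex_apply, Matrix.submatrix_apply, Equiv.symm_symm, Matrix.one_apply,
    e.injective.eq_iff, Function.comp]

theorem finrank_map_mkQ {F V : Type} [Field F] [AddCommGroup V] [Module F V]
    [FiniteDimensional F V] {W W' : Submodule F V} {d : ℕ} (h : W ≤ W')
    (hd : finrank F W' = finrank F W + d) : finrank F (W'.map W.mkQ) = d := by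
  have := LinearMap.finrank_range_add_finrank_ker (W.mkQ.domRestrict W')
  have hk : finrank F (LinearMap.ker (W.mkQ.domRestrict W')) = finrank F W := by
    rw [LinearMap.ker_domRestrict, Submodule.ker_mkQ]
    exact (Submodule.comapSubtypeEquivOfLe h).finrank_eq
  rw [LinearMap.range_domRestrict, hk] at this
  omega

theorem exists_linearIndependent_mkQ {F V : Type} [Field F] [AddCommGroup V] [Module F V]
    [FiniteDimensional F V] {W W' : Submodule F V} {d : ℕ} (h : W ≤ W')
    (hd : finrank F W' = finrank F W + d) :
    ∃ c : Fin d → V, (∀ m, c m ∈ W') ∧ LinearIndependent F (fun m => W.mkQ (c m)) := by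
  let b := finBasisOfFinrankEq F (W'.map W.mkQ) (finrank_map_mkQ h hd)
  have hb : ∀ m, ∃ v ∈ W', W.mkQ v = b m := fun m => Submodule.mem_map.mp (b m).2
  choose c hc hcb using hb
  refine ⟨c, hc, ?_⟩
  have := b.linearIndependent.map' (W'.map W.mkQ).subtype (Submodule.ker_subtype _)
  rwa [show (Submodule.subtype _ ∘ b) = fun m => W.mkQ (c m) from
    funext fun m => (hcb m).symm] at this

theorem le_sup_span_range {F V : Type} [Field F] [AddCommGroup V] [Module F V]
    [FiniteDimensional F V] {W W' : Submodule F V} {d : ℕ} (h : W ≤ W')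
    (hd : finrank F W' = finrank F W + d) {c : Fin d → V} (hc : ∀ m, c m ∈ W')
    (hi : LinearIndependent F (fun m => W.mkQ (c m))) :
    W' ≤ W ⊔ Submodule.span F (Set.range c) := by
  have hle : (Submodule.span F (Set.range c)).map W.mkQ ≤ W'.map W.mkQ :=
    Submodule.map_mono (Submodule.span_le.mpr (by rintro _ ⟨m, rfl⟩; exact hc m))
  have heq : (Submodule.span F (Set.range c)).map W.mkQ = W'.map W.mkQ := by
    refine Submodule.eq_of_le_of_finrank_eq hle ?_
    rw [finrank_map_mkQ h hd, Submodule.map_span, ← Set.range_comp]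
    exact (finrank_span_eq_card hi).trans (Fintype.card_fin d)
  rw [← Submodule.comap_map_mkQ, heq]
  exact Submodule.le_comap_map _ _

theorem AlphaFlag.exists_adapted_basis {F : Type} [Field F] {q n : ℕ} {α : SigmaNQ q n}
    (A : AlphaFlag F α) :
    ∃ b : Basis (Σ i : Fin α.ρ.length, Fin (α.ρ.blocksFun i)) F (Fin n → F),
      (∀ j, A.V j = Submodule.span F (b '' {x | x.1.castSucc < j})) ∧
      ∀ i hi m, b ⟨i, m⟩ = A.B i hi m := by
  classical
  have key : ∀ i, ∃ c : Fin (α.ρ.blocksFun i) → (Fin n → F), (∀ m, c m ∈ A.V i.succ) ∧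
      LinearIndependent F (fun m => (A.V i.castSucc).mkQ (c m)) ∧ ∀ hi, c = A.B i hi := by
    intro i
    by_cases hi : i ∈ α.I
    · exact ⟨A.B i hi, A.B_mem i hi, A.B_indep i hi, fun _ => rfl⟩
    · obtain ⟨c, h1, h2⟩ :=
        exists_linearIndependent_mkQ (A.mono i.castSucc_le_succ) (A.dim i)
      exact ⟨c, h1, h2, fun h => absurd h hi⟩
  choose c hc hci hcB using key
  let v : (Σ i : Fin α.ρ.length, Fin (α.ρ.blocksFun i)) → (Fin n → F) := fun x => c x.1 x.2
  have hV : ∀ j, A.V j = Submodule.span F (v '' {x | x.1.castSucc < j}) := by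
    intro j
    refine le_antisymm ?_ (Submodule.span_le.mpr ?_)
    · induction j using Fin.induction with
      | zero => simp [A.bot_eq]
      | succ i ih =>
        refine (le_sup_span_range (A.mono i.castSucc_le_succ) (A.dim i) (hc i) (hci i)).trans
          (sup_le (ih.trans (Submodule.span_mono (Set.image_mono ?_)))
            (Submodule.span_mono ?_))
        · exact fun x hx => lt_trans hx i.castSucc_lt_succ
        · rintro _ ⟨m, rfl⟩
          exact ⟨⟨i, m⟩, i.castSucc_lt_succ, rfl⟩
    · rintro _ ⟨x, hx, rfl⟩
      exact A.mono (Fin.castSucc_lt_iff_succ_le.mp hx) (hc x.1 x.2)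
  have hcard : Fintype.card (Σ i : Fin α.ρ.length, Fin (α.ρ.blocksFun i))
      = finrank F (Fin n → F) := by
    simp [Fintype.card_sigma, α.ρ.sum_blocksFun]
  have htop : ⊤ ≤ Submodule.span F (Set.range v) := by
    rw [← A.top_eq, hV]
    exact Submodule.span_mono (Set.image_subset_range _ _)
  refine ⟨basisOfTopLeSpanOfCardEqFinrank v htop hcard, ?_, ?_⟩
  · simpa using hV
  · intro i hi m
    simp [v, hcB i hi]

theorem glMap_injective {F : Type} [Field F] {n : ℕ} (g : GL (Fin n) F) :
    Function.Injective (glMap F g) :=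
  Matrix.mulVec_injective_of_isUnit g.isUnit

theorem map_glMap_eq_of_le {F : Type} [Field F] {n : ℕ} (g : GL (Fin n) F)
    {W W' : Submodule F (Fin n → F)} (h : W.map (glMap F g) ≤ W')
    (hd : finrank F W = finrank F W') : W.map (glMap F g) = W' :=
  Submodule.eq_of_le_of_finrank_eq h 
    ((Submodule.equivMapOfInjective _ (glMap_injective g) W).finrank_eq.symm.trans hd)

theorem exists_glMap_eq {F : Type} [Field F] {n : ℕ} (f : (Fin n → F) →ₗ[F] (Fin n → F))
    (hf : IsUnit (LinearMap.det f)) : ∃ g : GL (Fin n) F, glMap F g = f := by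
  refine ⟨Matrix.GeneralLinearGroup.mk'' (LinearMap.toMatrix' f) (by simpa using hf), ?_⟩
  change Matrix.toLin' (LinearMap.toMatrix' f) = f
  simp

theorem AlphaFlag.card_stabilizer {F : Type} [Field F] {q n : ℕ} {α : SigmaNQ q n}
    (A : AlphaFlag F α) :
    Nat.card {g : GL (Fin n) F // MapsAlphaFlag F g A A} =
      Nat.card (blockStab F (Sigma.fst : (Σ i : Fin α.ρ.length, Fin (α.ρ.blocksFun i)) → _)
        (fun i => (i : ℕ)) (· ∈ α.I)) := by
  classical
  obtain ⟨b, hV, hB⟩ := A.exists_adapted_basis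
  have hmem : ∀ j v, v ∈ A.V j ↔ ∀ x, j ≤ x.1.castSucc → b.repr v x = 0 := by
    intro j v
    rw [hV, Basis.mem_span_image]
    refine ⟨fun h x hx => ?_, fun h x hx => ?_⟩
    · by_contra hne
      exact absurd (h (Finsupp.mem_support_iff.mpr hne)) (not_lt.mpr hx)
    · by_contra hlt
      exact Finsupp.mem_support_iff.mp hx (h x (not_lt.mp hlt))
  have hbmem : ∀ j x, x.1.castSucc < j → b x ∈ A.V j := fun j x hx => by
    rw [hV]
    exact Submodule.subset_span ⟨x, hx, rfl⟩
  have hiff : ∀ g : GL (Fin n) F, MapsAlphaFlag F g A A ↔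
      LinearMap.toMatrix b b (glMap F g) ∈ blockStab F
        (Sigma.fst : (Σ i : Fin α.ρ.length, Fin (α.ρ.blocksFun i)) → _)
        (fun i => (i : ℕ)) (· ∈ α.I) := by
    intro g
    constructor
    · rintro ⟨h1, h2⟩
      refine ⟨?_, fun x y hxy => ?_, fun x y hxy hx => ?_⟩
      · rw [LinearMap.det_toMatrix]
        have := Matrix.isUnits_det_units g
        rwa [← LinearMap.det_toLin'] at this
      · rw [LinearMap.toMatrix_apply]
        have : glMap F g (b y) ∈ A.V y.1.succ := by
          rw [← h1]
          exact Submodule.mem_map_of_mem (hbmem _ _ y.1.castSucc_lt_succ)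
        exact (hmem _ _).mp this x (Fin.le_def.mpr (by simpa using hxy))
      · obtain ⟨i, m⟩ := x
        obtain ⟨i', l⟩ := y
        obtain rfl : i = i' := hxy
        have := (hmem _ _).mp (h2 i hx l) ⟨i, m⟩ le_rfl
        rw [← hB, map_sub, Finsupp.sub_apply, sub_eq_zero, Basis.repr_self] at this
        rw [LinearMap.toMatrix_apply, this, Matrix.one_apply, Finsupp.single_apply]
        simp only [eq_comm]
    · rintro ⟨-, h1, h2⟩
      refine ⟨fun j => map_glMap_eq_of_le g ?_ rfl, fun i hi m => ?_⟩
      · rw [Submodule.map_le_iff_le_comap]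
        nth_rewrite 1 [hV]
        rw [Submodule.span_le]
        rintro _ ⟨y, hy, rfl⟩
        refine (hmem _ _).mpr fun x hx => ?_
        rw [← LinearMap.toMatrix_apply]
        exact h1 x y (by simpa using lt_of_lt_of_le hy hx)
      · refine (hmem _ _).mpr fun x hx => ?_
        rw [← hB i hi, map_sub, Finsupp.sub_apply, ← LinearMap.toMatrix_apply, Basis.repr_self]
        rcases hx.lt_or_eq with hlt | heq
        · rw [h1 x _ (by simpa using hlt), Finsupp.single_eq_of_ne, sub_zero]
          rintro rfl
          exact absurd hlt (lt_irrefl _)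
        · have hxi : x.1 = i := Fin.castSucc_injective _ heq.symm
          rw [h2 x ⟨i, m⟩ hxi (hxi ▸ hi), Matrix.one_apply, Finsupp.single_apply, sub_eq_zero]
          simp only [eq_comm]
  refine Nat.card_eq_of_bijective (fun g => ⟨_, (hiff g.1).mp g.2⟩) ⟨?_, ?_⟩
  · rintro ⟨g, hg⟩ ⟨g', hg'⟩ h
    have h' : glMap F g = glMap F g' := (LinearMap.toMatrix b b).injective (congrArg Subtype.val h)
    exact Subtype.ext (Units.ext (Matrix.toLin'.injective h'))
  · rintro ⟨M, hM⟩
    obtain ⟨g, hg⟩ := exists_glMap_eq (Matrix.toLin b b M) (by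
      rw [← LinearMap.det_toMatrix b, LinearMap.toMatrix_toLin]
      exact hM.1)
    have hgM : LinearMap.toMatrix b b (glMap F g) = M := by rw [hg, LinearMap.toMatrix_toLin]
    exact ⟨⟨g, (hiff g).mpr (hgM ▸ hM)⟩, Subtype.ext hgM⟩

theorem exists_equiv_of_map_univ_eq {ι κ γ : Type} [Fintype ι] [Fintype κ] {f : ι → γ} {g : κ → γ}
    (h : Finset.univ.val.map f = Finset.univ.val.map g) : ∃ e : ι ≃ κ, ∀ i, g (e i) = f i := by
  classical
  have hc : ∀ c, Nonempty ({i // f i = c} ≃ {j // g j = c}) := by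
    intro c
    have := congrArg (Multiset.count c) h
    rw [Multiset.count_map, Multiset.count_map] at this
    refine Fintype.card_eq.mp ?_
    rw [Fintype.card_subtype, Fintype.card_subtype]
    simp only [eq_comm (b := c)]
    exact this
  let e : ι ≃ κ := (Equiv.sigmaFiberEquiv f).symm.trans
    ((Equiv.sigmaCongrRight fun c => (hc c).some).trans (Equiv.sigmaFiberEquiv g))
  exact ⟨e, fun i => ((hc (f i)).some ⟨i, rfl⟩).2⟩

/-- The parts of `α`, each marked with whether it carries a basis. -/
def SigmaNQ.markedPart {q n : ℕ} (α : SigmaNQ q n) (i : Fin α.ρ.length) : ℕ × Bool :=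
  (α.ρ.blocksFun i, decide (i ∈ α.I))

theorem SigmaNQ.map_markedPart {q n : ℕ} (α : SigmaNQ q n) :
    Finset.univ.val.map α.markedPart =
      α.typeSigma.map (fun p => (p, true)) + α.typeTau.map (fun p => (p, false)) := by
  rw [← Finset.union_compl α.I, ← Finset.disjUnion_eq_union _ _ disjoint_compl_right,
    Finset.disjUnion_val, Multiset.map_add, SigmaNQ.typeSigma, SigmaNQ.typeTau,
    Multiset.map_map, Multiset.map_map]
  congr 1
  · exact Multiset.map_congr rfl fun i hi => by simpa [markedPart] using hi
  · exact Multiset.map_congr rfl fun i hi => by simpa [markedPart] using hi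

theorem AlphaFlag.card_stabilizer_eq {F : Type} [Field F] {q n : ℕ} {α β : SigmaNQ q n}
    (hσ : α.typeSigma = β.typeSigma) (hτ : α.typeTau = β.typeTau) (A : AlphaFlag F α)
    (C : AlphaFlag F β) :
    Nat.card {g : GL (Fin n) F // MapsAlphaFlag F g A A} =
      Nat.card {g : GL (Fin n) F // MapsAlphaFlag F g C C} := by
  obtain ⟨e, he⟩ := exists_equiv_of_map_univ_eq (f := α.markedPart) (g := β.markedPart)
    (by rw [α.map_markedPart, β.map_markedPart, hσ, hτ])
  have h1 : ∀ i, α.ρ.blocksFun i = β.ρ.blocksFun (e i) := fun i =>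
    (congrArg Prod.fst (he i)).symm
  have h2 : ∀ i, e i ∈ β.I ↔ i ∈ α.I := fun i => by
    simpa [SigmaNQ.markedPart] using congrArg Prod.snd (he i)
  rw [A.card_stabilizer, C.card_stabilizer,
    card_blockStab_reindex (ι := Fin α.ρ.length) (blk := Sigma.fst) _
      (Equiv.sigmaCongr e fun i => finCongr (h1 i)) e.injective (fun _ => rfl) h2]
  exact card_blockStab_reorder _ _ Fin.val_injective (Fin.val_injective.comp e.injective)

theorem MapsAlphaFlag.flagChain {F : Type} [Field F] {q n : ℕ} {α : SigmaNQ q n}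
    {g : GL (Fin n) F} {A : AlphaFlag F α} (h : MapsAlphaFlag F g A A) :
    FlagChain (glMap F g) ⊥ (List.ofFn α.markedPart) := by
  obtain ⟨h1, h2⟩ := h
  have hinv : ∀ j, ∀ x ∈ A.V j, glMap F g x ∈ A.V j := fun j x hx => by
    rw [← h1 j]
    exact Submodule.mem_map_of_mem hx
  refine flagChain_iff.mpr ⟨fun i => if h : i < α.ρ.length + 1 then A.V ⟨i, h⟩ else ⊤, ?_, ?_, ?_⟩
  · simpa using A.bot_eq
  · simpa [Fin.last] using A.top_eq
  · intro i hi
    have hi' : i < α.ρ.length := by simpa using hi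
    beta_reduce
    rw [dif_pos (Nat.lt_succ_of_lt hi'), dif_pos (Nat.succ_lt_succ hi'), List.getElem_ofFn]
    change FlagStep _ (α.markedPart ⟨i, hi'⟩) (A.V (Fin.castSucc ⟨i, hi'⟩))
      (A.V (Fin.succ ⟨i, hi'⟩))
    generalize (⟨i, hi'⟩ : Fin α.ρ.length) = i
    refine ⟨A.mono i.castSucc_le_succ, hinv _, hinv _, A.dim i, fun hI => ?_⟩
    have hI : i ∈ α.I := by simpa [SigmaNQ.markedPart] using hI
    have hle : A.V i.succ ≤ (A.V i.castSucc).comap (glMap F g - LinearMap.id) := by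
      refine (le_sup_span_range (A.mono i.castSucc_le_succ) (A.dim i) (A.B_mem i hI)
        (A.B_indep i hI)).trans (sup_le (fun x hx => ?_) (Submodule.span_le.mpr ?_))
      · exact Submodule.sub_mem _ (hinv _ x hx) hx
      · rintro _ ⟨m, rfl⟩
        exact h2 i hI m
    exact fun v hv => hle hv

theorem FlagChain.exists_mapsAlphaFlag {F : Type} [Field F] {q n : ℕ} {α : SigmaNQ q n}
    {g : GL (Fin n) F} (h : FlagChain (glMap F g) ⊥ (List.ofFn α.markedPart)) :
    ∃ A : AlphaFlag F α, MapsAlphaFlag F g A A := by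
  obtain ⟨U, h0, hl, hs⟩ := flagChain_iff.mp h
  have hl : U α.ρ.length = ⊤ := by simpa using hl
  have hs : ∀ i : Fin α.ρ.length,
      FlagStep (glMap F g) (α.markedPart i) (U i.castSucc) (U i.succ) := fun i => by
    simpa using hs i (by simp)
  choose c hc hci using fun i => exists_linearIndependent_mkQ (hs i).1 (hs i).2.2.2.1
  let A : AlphaFlag F α :=
    { V := fun j => U j
      mono := Fin.monotone_iff_le_succ.mpr fun i => (hs i).1
      bot_eq := h0
      top_eq := hl
      dim := fun i => (hs i).2.2.2.1
      B := fun i _ => c i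
      B_mem := fun i _ => hc i
      B_indep := fun i _ => hci i }
  refine ⟨A, fun j => map_glMap_eq_of_le g ?_ rfl, fun i hi m => ?_⟩
  · rw [Submodule.map_le_iff_le_comap]
    cases j using Fin.lastCases with
    | last => rw [A.top_eq, Submodule.comap_top]
    | cast i => exact fun x hx => (hs i).2.1 x hx
  · exact (hs i).2.2.2.2 (by simpa [SigmaNQ.markedPart] using hi) _ (hc i m)

/-- Whether `g` fixes some flag depends only on the type of the flag. -/
theorem MapsAlphaFlag.exists_of_type_eq {F : Type} [Field F] {q n : ℕ} {α β : SigmaNQ q n}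
    (hσ : α.typeSigma = β.typeSigma) (hτ : α.typeTau = β.typeTau) {g : GL (Fin n) F}
    {A : AlphaFlag F α} (h : MapsAlphaFlag F g A A) :
    ∃ C : AlphaFlag F β, MapsAlphaFlag F g C C := by
  refine (h.flagChain.perm ?_).exists_mapsAlphaFlag
  rw [← Multiset.coe_eq_coe, ← Fin.univ_val_map, ← Fin.univ_val_map, α.map_markedPart,
    β.map_markedPart, hσ, hτ]

theorem glMap_mul {F : Type} [Field F] {n : ℕ} (g h : GL (Fin n) F) :
    glMap F (g * h) = glMap F g ∘ₗ glMap F h :=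
  Matrix.mulVecLin_mul _ _

theorem glMap_one {F : Type} [Field F] {n : ℕ} : glMap F (1 : GL (Fin n) F) = LinearMap.id :=
  Matrix.mulVecLin_one

theorem MapsAlphaFlag.one {F : Type} [Field F] {q n : ℕ} {α : SigmaNQ q n} (A : AlphaFlag F α) :
    MapsAlphaFlag F 1 A A := by
  refine ⟨fun j => ?_, fun i hi m => ?_⟩ <;> simp [glMap_one]

theorem MapsAlphaFlag.mul {F : Type} [Field F] {q n : ℕ} {α : SigmaNQ q n} {g h : GL (Fin n) F}
    {A C D : AlphaFlag F α} (hg : MapsAlphaFlag F g A C) (hh : MapsAlphaFlag F h C D) :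
    MapsAlphaFlag F (h * g) A D := by
  refine ⟨fun j => ?_, fun i hi m => ?_⟩
  · rw [glMap_mul, Submodule.map_comp, hg.1, hh.1]
  · have h1 : glMap F h (glMap F g (A.B i hi m) - C.B i hi m) ∈ D.V i.castSucc := by
      rw [← hh.1]
      exact Submodule.mem_map_of_mem (hg.2 i hi m)
    have := Submodule.add_mem _ h1 (hh.2 i hi m)
    rw [map_sub, sub_add_sub_cancel] at this
    rwa [glMap_mul]

theorem MapsAlphaFlag.inv {F : Type} [Field F] {q n : ℕ} {α : SigmaNQ q n} {g : GL (Fin n) F}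
    {A C : AlphaFlag F α} (hg : MapsAlphaFlag F g A C) : MapsAlphaFlag F g⁻¹ C A := by
  have hid : glMap F g⁻¹ ∘ₗ glMap F g = LinearMap.id := by
    rw [← glMap_mul, inv_mul_cancel, glMap_one]
  have hV : ∀ j, (C.V j).map (glMap F g⁻¹) = A.V j := fun j => by
    rw [← hg.1, ← Submodule.map_comp, hid, Submodule.map_id]
  refine ⟨hV, fun i hi m => ?_⟩
  have h1 : glMap F g⁻¹ (glMap F g (A.B i hi m) - C.B i hi m) ∈ A.V i.castSucc := by
    rw [← hV]
    exact Submodule.mem_map_of_mem (hg.2 i hi m)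
  have h2 : glMap F g⁻¹ (glMap F g (A.B i hi m)) = A.B i hi m := LinearMap.congr_fun hid _
  rw [map_sub, h2] at h1
  rw [← Submodule.neg_mem_iff, neg_sub]
  exact h1

theorem AlphaFlag.exists_image {F : Type} [Field F] {q n : ℕ} {α : SigmaNQ q n}
    (A : AlphaFlag F α) (g : GL (Fin n) F) : ∃ C : AlphaFlag F α, MapsAlphaFlag F g A C := by
  have hinj := glMap_injective g
  have hdim : ∀ j, finrank F ((A.V j).map (glMap F g)) = finrank F (A.V j) := fun j =>
    (Submodule.equivMapOfInjective _ hinj _).finrank_eq.symm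
  refine ⟨{ V := fun j => (A.V j).map (glMap F g)
            mono := fun i j h => Submodule.map_mono (A.mono h)
            bot_eq := by rw [A.bot_eq, Submodule.map_bot]
            top_eq := map_glMap_eq_of_le g le_top (by rw [A.top_eq])
            dim := fun i => by rw [hdim, hdim, A.dim]
            B := fun i hi m => glMap F g (A.B i hi m)
            B_mem := fun i hi m => Submodule.mem_map_of_mem (A.B_mem i hi m)
            B_indep := fun i hi => ?_ }, fun j => rfl, fun i hi m => by simp⟩
  have hker : LinearMap.ker ((A.V i.castSucc).mapQ ((A.V i.castSucc).map (glMap F g)) (glMap F g)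
      (Submodule.le_comap_map _ _)) = ⊥ := by
    rw [Submodule.ker_mapQ, Submodule.comap_map_eq_of_injective hinj, Submodule.mkQ_map_self]
  exact (A.B_indep i hi).map' _ hker

theorem AlphaFlag.exists_maps {F : Type} [Field F] {q n : ℕ} {α : SigmaNQ q n}
    (A C : AlphaFlag F α) : ∃ g : GL (Fin n) F, MapsAlphaFlag F g A C := by
  obtain ⟨b, hV, hB⟩ := A.exists_adapted_basis
  obtain ⟨b', hV', hB'⟩ := C.exists_adapted_basis
  let f := b.equiv b' (Equiv.refl _)
  have hf : ∀ x, f (b x) = b' x := fun x => b.equiv_apply x b' _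
  obtain ⟨g, hg⟩ := exists_glMap_eq (f : (Fin n → F) →ₗ[F] (Fin n → F)) f.isUnit_det'
  refine ⟨g, fun j => ?_, fun i hi m => ?_⟩
  · rw [hg, hV, hV', Submodule.map_span, Set.image_image]
    simp only [LinearEquiv.coe_coe, hf]
  · rw [hg, ← hB, ← hB', LinearEquiv.coe_coe, hf, sub_self]
    exact Submodule.zero_mem _

theorem sum_card_translate {G : Type} [Group G] [Fintype G] (Y : Set G) (P : G → Prop) :
    ∑ g : G, Nat.card {y : G // y ∈ Y ∧ P (g⁻¹ * y)} = Nat.card Y * Nat.card {g // P g} := by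
  rw [← Nat.card_sigma, ← Nat.card_prod]
  exact Nat.card_congr
    { toFun := fun x => (⟨x.2.1, x.2.2.1⟩, ⟨x.1⁻¹ * x.2.1, x.2.2.2⟩)
      invFun := fun p => ⟨p.1.1 * p.2.1⁻¹, p.1.1, p.1.2, by simpa using p.2.2⟩
      left_inv := by
        rintro ⟨g, y, hy, hP⟩
        simp only [Sigma.mk.injEq]
        have : y * (g⁻¹ * y)⁻¹ = g := by simp
        refine ⟨this, ?_⟩
        rw! [this]
        rfl
      right_inv := by
        rintro ⟨⟨y, hy⟩, ⟨p, hp⟩⟩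
        simp }

theorem AlphaFlag.card_translate_eq {F : Type} [Field F] {q n : ℕ} {α : SigmaNQ q n}
    {A C : AlphaFlag F α} {g : GL (Fin n) F} (h : MapsAlphaFlag F g A C)
    (Y : Set (GL (Fin n) F)) :
    Nat.card {y : GL (Fin n) F // y ∈ Y ∧ MapsAlphaFlag F (g⁻¹ * y) A A} =
      Nat.card {y : GL (Fin n) F // y ∈ Y ∧ MapsAlphaFlag F y A C} := by
  refine Nat.card_congr (Equiv.subtypeEquivRight fun y => and_congr_right fun _ =>
    ⟨fun hy => ?_, fun hy => hy.mul h.inv⟩)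
  simpa using hy.mul h

theorem STClique.card_le_one {F : Type} [Field F] [Fintype F] {q n : ℕ} {Y : Set (GL (Fin n) F)}
    {σ τ : Multiset ℕ} (h : STClique F q n Y σ τ) {α : SigmaNQ q n} (hσ : α.typeSigma = σ)
    (hτ : α.typeTau = τ) (A C : AlphaFlag F α) :
    Nat.card {g : GL (Fin n) F // g ∈ Y ∧ MapsAlphaFlag F g A C} ≤ 1 := by
  rw [Finite.card_le_one_iff_subsingleton]
  refine ⟨fun x y => Subtype.ext ?_⟩
  by_contra hne
  exact h _ x.2.1 _ y.2.1 hne α hσ hτ A (y.2.2.mul x.2.2.inv)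

/-- If `Y ⊆ GL(n,q)` is nonempty and `(σ,τ)`-transitive and `H` is the stabiliser of a fixed
`α`-flag of type `(σ,τ)`, then `|Y| ≥ |GL(n,q)|/|H|` (stated multiplicatively as
`|Y|·|H| ≥ |GL(n,q)|`), with equality iff `Y` is a `(σ,τ)`-clique; in the case of equality
`Y` is sharply transitive on `α`-flags. -/
theorem statement4 (q : ℕ) (hq : IsPrimePow q) (F : Type) [Field F] [Fintype F]
    (hF : Fintype.card F = q) (n : ℕ) (hn : 0 < n)
    (σ τ : Multiset ℕ) (hθ : InTheta q n σ τ)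
    (α : SigmaNQ q n) (hα1 : α.typeSigma = σ) (hα2 : α.typeTau = τ)
    (A₀ : AlphaFlag F α)
    (Y : Set (GL (Fin n) F)) (hYne : Y.Nonempty) (hY : STTransitive F q n Y σ τ) :
    Nat.card (GL (Fin n) F)
        ≤ Nat.card Y * Nat.card {g : GL (Fin n) F // MapsAlphaFlag F g A₀ A₀} ∧
    (Nat.card Y * Nat.card {g : GL (Fin n) F // MapsAlphaFlag F g A₀ A₀}
        = Nat.card (GL (Fin n) F) ↔ STClique F q n Y σ τ) ∧
    (Nat.card Y * Nat.card {g : GL (Fin n) F // MapsAlphaFlag F g A₀ A₀}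
        = Nat.card (GL (Fin n) F) →
      ∀ A C : AlphaFlag F α,
        Nat.card {g : GL (Fin n) F // g ∈ Y ∧ MapsAlphaFlag F g A C} = 1) := by
  classical
  obtain ⟨β, hβ1, hβ2, r, hr⟩ := hY
  have hσ : α.typeSigma = β.typeSigma := hα1.trans hβ1.symm
  have hτ : α.typeTau = β.typeTau := hα2.trans hβ2.symm
  obtain ⟨B₀, -⟩ := (MapsAlphaFlag.one A₀).exists_of_type_eq hσ hτ
  have hsum : Nat.card Y * Nat.card {g : GL (Fin n) F // MapsAlphaFlag F g A₀ A₀}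
      = Nat.card (GL (Fin n) F) * r := by
    rw [AlphaFlag.card_stabilizer_eq hσ hτ A₀ B₀, ← sum_card_translate,
      Finset.sum_congr rfl fun g _ => ?_, Finset.sum_const, Finset.card_univ, smul_eq_mul,
      Nat.card_eq_fintype_card]
    obtain ⟨C, hC⟩ := B₀.exists_image g
    rw [AlphaFlag.card_translate_eq hC, hr]
  have hG : 0 < Nat.card (GL (Fin n) F) := Nat.card_pos
  have hr0 : 0 < r := by
    obtain ⟨y, hy⟩ := hYne
    obtain ⟨C, hC⟩ := B₀.exists_image y
    rw [← hr B₀ C]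
    have : Nonempty {g : GL (Fin n) F // g ∈ Y ∧ MapsAlphaFlag F g B₀ C} := ⟨⟨y, hy, hC⟩⟩
    exact Nat.card_pos
  have heq : Nat.card Y * Nat.card {g : GL (Fin n) F // MapsAlphaFlag F g A₀ A₀}
      = Nat.card (GL (Fin n) F) ↔ STClique F q n Y σ τ := by
    rw [hsum, Nat.mul_eq_left hG.ne']
    constructor
    · rintro rfl x hx y hy hne γ hγ1 hγ2 A hA
      obtain ⟨B, hB⟩ := hA.exists_of_type_eq (hγ1.trans hβ1.symm) (hγ2.trans hβ2.symm)
      obtain ⟨C, hC⟩ := B.exists_image x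
      have hy' : MapsAlphaFlag F y B C := by simpa using hB.mul hC
      have := Finite.card_le_one_iff_subsingleton.mp (hr B C).le
      exact hne (congrArg Subtype.val (Subsingleton.elim
        (⟨x, hx, hC⟩ : {g : GL (Fin n) F // g ∈ Y ∧ MapsAlphaFlag F g B C}) ⟨y, hy, hy'⟩))
    · intro h
      have := h.card_le_one hβ1 hβ2 B₀ B₀
      rw [hr] at this
      omega
  refine ⟨hsum ▸ Nat.le_mul_of_pos_right _ hr0, heq, fun h A C => ?_⟩
  have hclique := heq.mp h
  have hle : ∀ g ∈ Finset.univ,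
      Nat.card {y : GL (Fin n) F // y ∈ Y ∧ MapsAlphaFlag F (g⁻¹ * y) A A} ≤ 1 := by
    intro g _
    obtain ⟨D, hD⟩ := A.exists_image g
    rw [AlphaFlag.card_translate_eq hD]
    exact hclique.card_le_one hα1 hα2 A D
  have htot := sum_card_translate Y fun g => MapsAlphaFlag F g A A
  rw [AlphaFlag.card_stabilizer_eq rfl rfl A A₀, h, Nat.card_eq_fintype_card,
    Fintype.card_eq_sum_ones] at htot
  obtain ⟨g, hg⟩ := A.exists_maps C
  rw [← AlphaFlag.card_translate_eq hg]
  exact (Finset.sum_eq_sum_iff_of_le hle).mp htot g (Finset.mem_univ g)
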